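/- Let n ≥ 1, k ∈ ℕ, p ∈ ℕ, and let u be a log-homogeneous function of order (−n−p, k) on ℝⁿ∖{0} satisfying the parity condition u(−y) = (−1)^{p+1} u(y) for all y ≠ 0. Then for every Schwartz function ψ on ℝⁿ, the meromorphic continuation of the function z ↦ ∫_{ℝⁿ} |y|^z u(y) ψ(y) dy (defined by the convergent integral for Re(z) > p) is holomorphic at z = 0. -/

import Mathlib

/-! In polar coordinates, writing `u(y) = |y|^{-n-p} ∑ (log |y|)^l v_l(y)` with `v_l` homogeneous of
degree `0`, the integral equals `∑_l ∫_0^∞ r^{s-1} (log r)^l A_l(r) dr` with `s = z - p` and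
`A_l(r) = ∫_{S^{n-1}} v_l(θ) ψ(rθ) dθ` (`integral_logTerm`). The components may be taken to have the
parity of `u`: replacing `v_l(y)` by `(v_l(y) + (-1)^{p+1} v_l(-y)) / 2` does not change `u`.

Since `∂_s r^{s-1} = r^{s-1} log r`, the `l`-th summand is the `l`-th derivative of the Mellin
transform of `A_l` (`mellin_log_pow`), so it suffices to continue the latter. The function `A_l` decays
rapidly and has at `0⁺` the expansion obtained by integrating the Taylor series of `t ↦ ψ(tθ)`
over the sphere (`radialMean_expansion`); subtracting a Taylor polynomial on `(0, 1]` continues its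
Mellin transform to `ℂ` with at most simple poles at `s = -j`, the residue being the coefficient of
`r^j` (`mellin_continuation`). The point `z = 0` is `s = -p`, and the coefficient of `r^p` is the
integral over the sphere of `v_l`, of parity `(-1)^{p+1}`, times a homogeneous polynomial of degree
`p`. This integrand is odd, so the coefficient vanishes (`integral_sphere_odd`) and there is no pole;
differentiating in `s` keeps it so.
-/


open MeasureTheory Complex Filter

noncomputable section

/-- Euclidean space `ℝⁿ`. -/
abbrev Euc (n : ℕ) := EuclideanSpace ℝ (Fin n)

/-- Tempered distributions on `ℝⁿ`. -/
abbrev TempDist (n : ℕ) := SchwartzMap (Euc n) ℂ →L[ℂ] ℂ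

/-- `u` is log-homogeneous of order `(m, k)` on `ℝⁿ ∖ {0}`, with components `ul`:
`u(y) = |y|^m ∑_{l≤k} (log|y|)^l u_l(y/|y|)` where the `u_l` are smooth functions of the
direction `y/|y|` (encoded as smooth `0`-homogeneous functions on `ℝⁿ ∖ {0}`). -/
def IsLogHomFunWith (n : ℕ) (m : ℂ) (k : ℕ) (u : Euc n → ℂ)
    (ul : Fin (k + 1) → Euc n → ℂ) : Prop :=
  (∀ l, ContDiffOn ℝ (⊤ : ℕ∞) (ul l) {y : Euc n | y ≠ 0}) ∧
  (∀ l (t : ℝ), 0 < t → ∀ y : Euc n, y ≠ 0 → ul l (t • y) = ul l y) ∧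
  (∀ y : Euc n, y ≠ 0 →
    u y = (‖y‖ : ℂ) ^ m * ∑ l : Fin (k + 1), (Real.log ‖y‖ : ℂ) ^ (l : ℕ) * ul l y)

/-- `u` is a log-homogeneous function of order `(m, k)` on `ℝⁿ ∖ {0}`. -/
def IsLogHomFun (n : ℕ) (m : ℂ) (k : ℕ) (u : Euc n → ℂ) : Prop :=
  ∃ ul, IsLogHomFunWith n m k u ul

/-- A tempered distribution `U` is log-homogeneous of order `(m, k)` with scaling
components `Uj`: for all `t > 0` and Schwartz `ψ`,
`⟨U, t^{-n} ψ(·/t)⟩ = t^m ∑_{j≤k} (log t)^j ⟨U_j, ψ⟩`. -/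
def IsLogHomDistWith (n : ℕ) (m : ℂ) (k : ℕ) (U : TempDist n)
    (Uj : Fin (k + 1) → TempDist n) : Prop :=
  ∀ (t : ℝ), 0 < t → ∀ (ψ φ : SchwartzMap (Euc n) ℂ),
    (∀ y : Euc n, φ y = ((t ^ n)⁻¹ : ℝ) • ψ (t⁻¹ • y)) →
    U φ = (t : ℂ) ^ m * ∑ j : Fin (k + 1), (Real.log t : ℂ) ^ (j : ℕ) * Uj j ψ

/-- A tempered distribution `U` is log-homogeneous of order `(m, k)`. -/
def IsLogHomDist (n : ℕ) (m : ℂ) (k : ℕ) (U : TempDist n) : Prop :=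
  ∃ Uj, IsLogHomDistWith n m k U Uj

/-- Partial derivative in the `i`-th coordinate direction. -/
def pderiv1 (n : ℕ) (i : Fin n) (f : Euc n → ℂ) : Euc n → ℂ :=
  fun x => fderiv ℝ f x (EuclideanSpace.single i 1)

/-- Iterated partial derivative `∂^α` for a multi-index `α ∈ ℕⁿ`. -/
def multiDeriv (n : ℕ) (α : Fin n → ℕ) (f : Euc n → ℂ) : Euc n → ℂ :=
  ((List.finRange n).foldr (fun i F => (pderiv1 n i)^[α i] ∘ F) id) f

/-- Monomial `y^α = y₁^{α₁} ⋯ y_n^{α_n}`. -/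
def multiPow (n : ℕ) (y : Euc n) (α : Fin n → ℕ) : ℂ :=
  ∏ i, ((y i : ℝ) : ℂ) ^ (α i)

/-- Multi-index factorial `α! = α₁! ⋯ α_n!`. -/
def multiFact (n : ℕ) (α : Fin n → ℕ) : ℕ :=
  ∏ i, Nat.factorial (α i)

/-- Integral over the unit sphere `S^{n-1}` with respect to the standard surface
measure (the measure `volume.toSphere`). -/
def sphereIntegral (n : ℕ) (f : Euc n → ℂ) : ℂ :=
  ∫ θ : Metric.sphere (0 : Euc n) 1, f θ ∂((volume : Measure (Euc n)).toSphere)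

/-! ### Mellin transforms and their continuation -/

/-- If `f` is locally integrable, is `O(t^{-a'})` at infinity for all `a' < a`, and grows more slowly
than every negative power at `0`, then on the strip `0 < re s < a` the Mellin transform of
`(log t)^l f(t)` converges and is the `l`-th derivative of that of `f`. This reduces logarithmic
factors to differentiation in `s`. -/
theorem mellin_log_pow {f : ℝ → ℂ} {a : ℝ} (hfc : LocallyIntegrableOn f (Set.Ioi 0))
    (htop : ∀ a' < a, f =O[atTop] (· ^ (-a')))
    (hbot : ∀ b : ℝ, 0 < b → f =O[nhdsWithin 0 (Set.Ioi 0)] (· ^ (-b))) (l : ℕ) :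
    ∀ s : ℂ, 0 < s.re → s.re < a →
      MellinConvergent (fun t => (Real.log t : ℂ) ^ l * f t) s ∧
      iteratedDeriv l (mellin f) s = mellin (fun t => (Real.log t : ℂ) ^ l * f t) s := by
  -- The hypotheses on `f` survive multiplication by `log t`, thanks to the room in the exponents.
  have key : ∀ l : ℕ, LocallyIntegrableOn (fun t => (Real.log t : ℂ) ^ l * f t) (Set.Ioi 0) ∧
      (∀ a' < a, (fun t => (Real.log t : ℂ) ^ l * f t) =O[atTop] (· ^ (-a'))) ∧
      (∀ b : ℝ, 0 < b →
        (fun t => (Real.log t : ℂ) ^ l * f t) =O[nhdsWithin 0 (Set.Ioi 0)] (· ^ (-b))) := by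
    intro l
    induction l with
    | zero => simpa using ⟨hfc, htop, hbot⟩
    | succ l ih =>
      obtain ⟨h1, h2, h3⟩ := ih
      have e : (fun t => (Real.log t : ℂ) ^ (l + 1) * f t) =
          fun t => Real.log t • ((Real.log t : ℂ) ^ l * f t) := by
        funext t; simp only [Complex.real_smul]; ring
      rw [e]
      refine ⟨?_, fun a' ha' => ?_, fun b hb => ?_⟩
      · refine h1.continuousOn_smul isOpen_Ioi.isLocallyClosed ?_
        exact Real.continuousOn_log.mono fun x hx => (ne_of_gt hx)
      · obtain ⟨a'', h, h'⟩ := exists_between ha'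
        exact isBigO_rpow_top_log_smul h (h2 a'' h')
      · obtain ⟨b'', h, h'⟩ := exists_between hb
        exact isBigO_rpow_zero_log_smul h' (h3 b'' h)
  have key2 : ∀ l : ℕ, ∀ s : ℂ, 0 < s.re → s.re < a →
      MellinConvergent (fun t => (Real.log t : ℂ) ^ l * f t) s ∧
      HasDerivAt (mellin (fun t => (Real.log t : ℂ) ^ l * f t))
        (mellin (fun t => (Real.log t : ℂ) ^ (l + 1) * f t) s) s := by
    intro l s h0 ha
    obtain ⟨h1, h2, h3⟩ := key l
    obtain ⟨a', h, h'⟩ := exists_between ha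
    obtain ⟨b', g, g'⟩ := exists_between h0
    refine ⟨mellinConvergent_of_isBigO_rpow h1 (h2 a' h') h (h3 b' g) g', ?_⟩
    have := (mellin_hasDerivAt_of_isBigO_rpow h1 (h2 a' h') h (h3 b' g) g').2
    have e : (fun t => (Real.log t : ℂ) ^ (l + 1) * f t) =
        fun t => Real.log t • ((Real.log t : ℂ) ^ l * f t) := by
      funext t; simp only [Complex.real_smul]; ring
    rw [e]
    exact this
  have hopen : IsOpen {s : ℂ | 0 < s.re ∧ s.re < a} :=
    (isOpen_lt continuous_const Complex.continuous_re).inter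
      (isOpen_lt Complex.continuous_re continuous_const)
  intro s h0 ha
  refine ⟨(key2 l s h0 ha).1, ?_⟩
  induction l generalizing s with
  | zero => simp
  | succ l ih =>
    rw [iteratedDeriv_succ, ← (key2 l s h0 ha).2.deriv]
    refine Filter.EventuallyEq.deriv_eq ?_
    filter_upwards [hopen.mem_nhds ⟨h0, ha⟩] with w hw using ih w hw.1 hw.2

/-- A continuous, rapidly decaying `f` with an asymptotic expansion `∑ c_j t^j` at `0⁺` has a Mellin
transform that continues meromorphically to `ℂ`. The term `c_j t^j` alone is responsible for the
possible pole at `-j`, so there is none at `-p` when `c_p = 0`. -/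
theorem mellin_continuation {f : ℝ → ℂ} (hf : Continuous f)
    (htop : ∀ a : ℝ, f =O[atTop] (· ^ (-a))) (c : ℕ → ℂ)
    (hexp : ∀ N : ℕ, (fun t : ℝ => f t - ∑ j ∈ Finset.range N, c j * (t : ℂ) ^ j)
      =O[nhdsWithin 0 (Set.Ioi 0)] (fun t : ℝ => t ^ (N : ℝ)))
    (p : ℕ) (hc : c p = 0) :
    ∃ M : ℂ → ℂ, Meromorphic M ∧ AnalyticAt ℂ M (-(p : ℂ)) ∧
      ∀ s : ℂ, 0 < s.re → M s = mellin f s := by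
  -- `h N` is `f` with its order-`N` Taylor polynomial removed on `(0, 1]`; its Mellin transform
  -- is holomorphic on `re s > -N`, and the removed terms have Mellin transforms `c j / (s + j)`.
  let I : ℕ → ℝ → ℂ := fun j => Set.indicator (Set.Ioc 0 1) (fun t : ℝ => (t : ℂ) ^ (j : ℂ))
  let h : ℕ → ℝ → ℂ := fun N t => f t - ∑ j ∈ Finset.range N, c j * I j t
  let G : ℕ → ℂ → ℂ := fun N s => mellin (h N) s + ∑ j ∈ Finset.range N, c j / (s + j)
  have hI : ∀ j : ℕ, Integrable (I j) := by
    intro j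
    refine (integrable_indicator_iff measurableSet_Ioc).2 ?_
    refine (Continuous.integrableOn_Icc (a := 0) (b := 1) ?_).mono_set Set.Ioc_subset_Icc_self
    simp only [Complex.cpow_natCast]
    fun_prop
  have hloc : ∀ N, LocallyIntegrableOn (h N) (Set.Ioi 0) := by
    intro N
    refine (hf.locallyIntegrable.sub ?_).locallyIntegrableOn _
    exact (integrable_finsetSum _ fun j _ => (hI j).const_mul _).locallyIntegrable
  have htop' : ∀ N (a : ℝ), h N =O[atTop] (· ^ (-a)) := by
    intro N a
    refine (htop a).congr' ?_ EventuallyEq.rfl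
    filter_upwards [eventually_gt_atTop 1] with t ht
    simp [h, I, ht]
  have hbot' : ∀ N : ℕ, h N =O[nhdsWithin 0 (Set.Ioi 0)] (fun t : ℝ => t ^ (-(-(N : ℝ)))) := by
    intro N
    rw [neg_neg]
    refine (hexp N).congr' ?_ EventuallyEq.rfl
    filter_upwards [Ioc_mem_nhdsGT (zero_lt_one' ℝ)] with t ht
    simp only [h, I, Set.indicator_of_mem ht, Complex.cpow_natCast]
  have hconv : ∀ (N : ℕ) (s : ℂ), -(N : ℝ) < s.re → MellinConvergent (h N) s := fun N s hs =>
    mellinConvergent_of_isBigO_rpow (hloc N) (htop' N (s.re + 1)) (by linarith) (hbot' N) hs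
  have hana : ∀ (N : ℕ) (s : ℂ), -(N : ℝ) < s.re → AnalyticAt ℂ (mellin (h N)) s := by
    intro N s hs
    have hopen : IsOpen {s : ℂ | -(N : ℝ) < s.re} :=
      isOpen_lt continuous_const Complex.continuous_re
    refine DifferentiableOn.analyticAt (s := {s : ℂ | -(N : ℝ) < s.re}) ?_ (hopen.mem_nhds hs)
    intro w hw
    exact (mellin_differentiableAt_of_isBigO_rpow (hloc N) (htop' N (w.re + 1)) (by linarith)
      (hbot' N) hw).differentiableWithinAt
  have hstep : ∀ (N : ℕ) (s : ℂ), -(N : ℝ) < s.re → G (N + 1) s = G N s := by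
    intro N s hs
    have hm := hasMellin_cpow_Ioc (N : ℂ) (s := s) (by simp; linarith)
    have e : h (N + 1) = fun t => h N t - c N • I N t := by
      funext t; simp only [h, Finset.sum_range_succ, smul_eq_mul]; ring
    have := (hasMellin_sub (hconv N s hs) (hm.1.const_smul (c N))).2
    simp only [G, Finset.sum_range_succ]
    rw [e, this, mellin_const_smul, hm.2, smul_eq_mul]
    ring
  have hle : ∀ (N d : ℕ) (s : ℂ), -(N : ℝ) < s.re → G (N + d) s = G N s := by
    intro N d s hs
    induction d with
    | zero => rfl
    | succ d ih =>
      rw [← ih, ← add_assoc]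
      refine hstep _ _ ?_
      push_cast
      have : (0 : ℝ) ≤ d := by positivity
      linarith
  have hle' : ∀ (N N' : ℕ) (s : ℂ), -(N : ℝ) < s.re → -(N' : ℝ) < s.re → G N s = G N' s := by
    intro N N' s hs hs'
    rcases le_total N N' with H | H
    · obtain ⟨d, rfl⟩ := Nat.exists_eq_add_of_le H
      exact (hle N d s hs).symm
    · obtain ⟨d, rfl⟩ := Nat.exists_eq_add_of_le H
      exact hle N' d s hs'
  -- The `G N` agree wherever `re s > -N`, even at the poles, where division by zero gives
  -- the same junk value in each; so choosing any admissible `N` at each point glues them.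
  let K : ℂ → ℕ := fun s => ⌊|s.re|⌋₊ + 1
  have hK : ∀ s : ℂ, -(K s : ℝ) < s.re := by
    intro s
    have h1 := Nat.lt_floor_add_one |s.re|
    have h2 := neg_abs_le s.re
    simp only [K]; push_cast; linarith
  have hev : ∀ s : ℂ, (fun w => G (K w) w) =ᶠ[nhds s] G (K s) := by
    intro s
    have hopen : IsOpen {w : ℂ | -(K s : ℝ) < w.re} :=
      isOpen_lt continuous_const Complex.continuous_re
    filter_upwards [hopen.mem_nhds (hK s)] with w hw using hle' _ _ w (hK w) hw
  refine ⟨fun w => G (K w) w, fun s => ?_, ?_, fun s hs => ?_⟩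
  · refine MeromorphicAt.congr ?_ ((hev s).symm.filter_mono nhdsWithin_le_nhds)
    refine (hana _ s (hK s)).meromorphicAt.add ?_
    refine MeromorphicAt.fun_sum fun j _ => ?_
    fun_prop
  · refine AnalyticAt.congr ?_ (hev _).symm
    refine (hana _ _ (hK _)).add ?_
    refine Finset.analyticAt_fun_sum _ fun j _ => ?_
    by_cases hj : j = p
    · subst hj; simp only [hc, zero_div]; exact analyticAt_const
    · refine analyticAt_const.div (by fun_prop) ?_
      rw [neg_add_eq_sub, sub_ne_zero]
      exact_mod_cast hj
  · show G (K s) s = _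
    rw [hle' (K s) 0 s (hK s) (by simpa using hs)]
    simp [G, h]

/-! ### Taylor expansion along rays -/

/-- The coefficient of `t^j` in the Taylor expansion at `0` of `t ↦ ψ(tθ)`, as a homogeneous
polynomial of degree `j` in `θ`. -/
def rayCoeff {n : ℕ} (ψ : SchwartzMap (Euc n) ℂ) (j : ℕ) (θ : Euc n) : ℂ :=
  ((Nat.factorial j : ℂ))⁻¹ * iteratedFDeriv ℝ j ψ 0 (fun _ => θ)

theorem rayCoeff_neg {n : ℕ} (ψ : SchwartzMap (Euc n) ℂ) (j : ℕ) (θ : Euc n) :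
    rayCoeff ψ j (-θ) = (-1) ^ j * rayCoeff ψ j θ := by
  have := (iteratedFDeriv ℝ j ψ 0).map_smul_univ (fun _ => (-1 : ℝ)) (fun _ => θ)
  simp only [neg_smul, one_smul, Finset.prod_const, Finset.card_univ, Fintype.card_fin] at this
  simp only [rayCoeff, this, Complex.real_smul]
  push_cast; ring

theorem continuous_rayCoeff {n : ℕ} (ψ : SchwartzMap (Euc n) ℂ) (j : ℕ) :
    Continuous (rayCoeff ψ j) :=
  continuous_const.mul ((iteratedFDeriv ℝ j ψ 0).cont.comp (by fun_prop))

theorem iteratedDeriv_ray {n : ℕ} (ψ : SchwartzMap (Euc n) ℂ) (θ : Euc n) (j : ℕ) (t : ℝ) :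
    iteratedDeriv j (fun t : ℝ => ψ (t • θ)) t = iteratedFDeriv ℝ j ψ (t • θ) (fun _ => θ) := by
  have h := (ContinuousLinearMap.toSpanSingleton ℝ θ).iteratedFDeriv_comp_right
    (ψ.smooth ⊤) t (i := j) (by exact_mod_cast le_top)
  have e : (fun t : ℝ => ψ (t • θ)) = ψ ∘ (ContinuousLinearMap.toSpanSingleton ℝ θ) := by
    funext t; simp
  rw [iteratedDeriv, e, h]
  simp

/-- Taylor's formula along rays, with a remainder uniform in the direction `θ`. -/
theorem ray_taylor {n : ℕ} (ψ : SchwartzMap (Euc n) ℂ) (N : ℕ) :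
    ∃ C : ℝ, ∀ θ : Euc n, ‖θ‖ = 1 → ∀ t ∈ Set.Icc (0 : ℝ) 1,
      ‖ψ (t • θ) - ∑ j ∈ Finset.range N, rayCoeff ψ j θ * (t : ℂ) ^ j‖ ≤ C * t ^ N := by
  rcases N with _ | N
  · refine ⟨SchwartzMap.seminorm ℝ 0 0 ψ, fun θ _ t _ => ?_⟩
    simpa using SchwartzMap.norm_le_seminorm ℝ ψ (t • θ)
  · refine ⟨SchwartzMap.seminorm ℝ 0 (N + 1) ψ / (Nat.factorial N), fun θ hθ t ht => ?_⟩
    have hcd : ContDiff ℝ (⊤ : ℕ∞) (fun t : ℝ => ψ (t • θ)) :=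
      (ψ.smooth ⊤).comp (contDiff_id.smul contDiff_const)
    have hder : ∀ j : ℕ, ∀ y ∈ Set.Icc (0 : ℝ) 1,
        iteratedDerivWithin j (fun t : ℝ => ψ (t • θ)) (Set.Icc 0 1) y =
          iteratedFDeriv ℝ j ψ (y • θ) (fun _ => θ) := by
      intro j y hy
      rw [iteratedDerivWithin_eq_iteratedDeriv (uniqueDiffOn_Icc zero_lt_one)
        ((hcd.of_le (by exact_mod_cast le_top)).contDiffAt) hy, iteratedDeriv_ray]
    have := taylor_mean_remainder_bound (f := fun t : ℝ => ψ (t • θ)) (n := N)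
      (C := SchwartzMap.seminorm ℝ 0 (N + 1) ψ) zero_le_one
      ((hcd.of_le (by exact_mod_cast le_top)).contDiffOn) ht ?_
    · rw [taylor_within_apply] at this
      simp only [sub_zero] at this
      rw [div_mul_eq_mul_div]
      refine le_trans (le_of_eq ?_) this
      congr 2
      refine Finset.sum_congr rfl fun j _ => ?_
      rw [hder j 0 (by simp)]
      simp only [rayCoeff, zero_smul, Complex.real_smul]
      push_cast; ring
    · intro y hy
      rw [hder _ y hy]
      refine ((iteratedFDeriv ℝ (N + 1) ψ (y • θ)).le_opNorm _).trans ?_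
      simpa [hθ] using SchwartzMap.norm_iteratedFDeriv_le_seminorm ℝ ψ (N + 1) (y • θ)

/-! ### The sphere and polar coordinates -/

theorem measurePreserving_neg_toSphere (n : ℕ) :
    MeasurePreserving (fun θ : Metric.sphere (0 : Euc n) 1 => -θ)
      (volume : Measure (Euc n)).toSphere (volume : Measure (Euc n)).toSphere := by
  refine ⟨continuous_neg.measurable, ?_⟩
  ext s hs
  rw [Measure.map_apply continuous_neg.measurable hs, Measure.toSphere_apply' _ hs,
    Measure.toSphere_apply' _ (continuous_neg.measurable hs)]
  congr 1
  rw [← Measure.measure_neg]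
  congr 1
  ext y
  simp only [Set.mem_neg, Set.mem_smul, Set.mem_image, Set.mem_preimage]
  constructor
  · rintro ⟨t, ht, _, ⟨θ, hθ, rfl⟩, h⟩
    exact ⟨t, ht, _, ⟨-θ, hθ, rfl⟩, by simp [h]⟩
  · rintro ⟨t, ht, _, ⟨θ, hθ, rfl⟩, h⟩
    exact ⟨t, ht, _, ⟨-θ, by simpa using hθ, rfl⟩, by simp [h]⟩

theorem integral_sphere_odd {n : ℕ} {f : Euc n → ℂ} (hf : ∀ θ, ‖θ‖ = 1 → f (-θ) = -f θ) :
    ∫ θ : Metric.sphere (0 : Euc n) 1, f θ ∂(volume : Measure (Euc n)).toSphere = 0 := by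
  have h := (measurePreserving_neg_toSphere n).integral_comp
    (Homeomorph.neg (Metric.sphere (0 : Euc n) 1)).measurableEmbedding (fun θ => f θ)
  have e : ∀ θ : Metric.sphere (0 : Euc n) 1, f ↑(-θ) = -f θ := fun θ => by
    simpa using hf θ (by simp)
  simp only [e, integral_neg] at h
  exact CharZero.eq_neg_self_iff.1 h.symm

/-- Integration in polar coordinates for a function that need not be radial. -/
theorem integral_polar {n : ℕ} (hn : 1 ≤ n) {F : Euc n → ℂ} (hF : Integrable F) :
    ∫ y, F y = ∫ r in Set.Ioi (0 : ℝ), (r : ℂ) ^ (n - 1) *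
      ∫ θ : Metric.sphere (0 : Euc n) 1, F (r • (θ : Euc n))
        ∂(volume : Measure (Euc n)).toSphere := by
  have : Nonempty (Fin n) := ⟨⟨0, hn⟩⟩
  have hd : Module.finrank ℝ (Euc n) = n := by simp
  let μ : Measure (Euc n) := volume
  have hmp := μ.measurePreserving_homeomorphUnitSphereProd
  have hemb := Homeomorph.measurableEmbedding (homeomorphUnitSphereProd (Euc n))
  rw [hd] at hmp
  let g : Metric.sphere (0 : Euc n) 1 × Set.Ioi (0 : ℝ) → ℂ := fun x => F (x.2.1 • x.1.1)
  have hg : ∀ x : ({0}ᶜ : Set (Euc n)), g (homeomorphUnitSphereProd (Euc n) x) = F x := by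
    intro x
    have : ‖(x : Euc n)‖ ≠ 0 := norm_ne_zero_iff.2 x.2
    simp [g, smul_smul, this]
  have hgint : Integrable g (μ.toSphere.prod (.volumeIoiPow (n - 1))) := by
    rw [← hmp.integrable_comp_emb hemb]
    have : g ∘ homeomorphUnitSphereProd (Euc n) = F ∘ (Subtype.val) := funext hg
    rw [this, ← integrableOn_iff_comap_subtypeVal (measurableSet_singleton _).compl]
    exact hF.integrableOn
  calc
    ∫ y, F y = ∫ x : ({(0)}ᶜ : Set (Euc n)), F x.1 ∂(μ.comap (↑)) := by
      rw [integral_subtype_comap (measurableSet_singleton _).compl F, restrict_compl_singleton]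
    _ = ∫ x, g x ∂μ.toSphere.prod (.volumeIoiPow (n - 1)) := by
      rw [← hmp.integral_comp hemb]
      simp only [hg]
    _ = ∫ r : Set.Ioi (0 : ℝ), ∫ θ, g (θ, r) ∂μ.toSphere ∂.volumeIoiPow (n - 1) :=
      integral_prod_symm _ hgint
    _ = _ := by
      simp only [Measure.volumeIoiPow, ENNReal.ofReal]
      rw [integral_withDensity_eq_integral_smul,
        integral_subtype_comap measurableSet_Ioi fun a ↦ Real.toNNReal (a ^ (n - 1)) •
          ∫ θ : Metric.sphere (0 : Euc n) 1, F (a • (θ : Euc n)) ∂μ.toSphere,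
        setIntegral_congr_fun measurableSet_Ioi fun x hx ↦ ?_]
      · simp only [NNReal.smul_def, Real.coe_toNNReal _ (pow_nonneg (Set.mem_Ioi.1 hx).le _),
          Complex.real_smul, Complex.ofReal_pow]
        rfl
      · exact (measurable_subtype_coe.pow_const _).real_toNNReal

/-! ### Spherical means of a Schwartz function -/

theorem schwartz_decay {n : ℕ} (ψ : SchwartzMap (Euc n) ℂ) (K : ℕ) :
    ∃ C : ℝ, 0 ≤ C ∧ ∀ y, ‖ψ y‖ ≤ C * ((1 + ‖y‖) ^ K)⁻¹ := by
  refine ⟨2 ^ K * (Finset.Iic (K, 0)).sup (fun m => SchwartzMap.seminorm ℝ m.1 m.2) ψ,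
    by positivity, fun y => ?_⟩
  have := SchwartzMap.one_add_le_sup_seminorm_apply (𝕜 := ℝ) (m := (K, 0)) le_rfl le_rfl ψ y
  rw [norm_iteratedFDeriv_zero] at this
  rw [← div_eq_mul_inv, le_div_iff₀ (by positivity), mul_comm]
  exact this

/-- The `v`-weighted spherical mean `r ↦ ∫_{S^{n-1}} v(θ) ψ(rθ) dθ`, for every real `r`. -/
def radialMean {n : ℕ} (v : Euc n → ℂ) (ψ : SchwartzMap (Euc n) ℂ) (r : ℝ) : ℂ :=
  ∫ θ : Metric.sphere (0 : Euc n) 1, v θ * ψ (r • (θ : Euc n))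
    ∂(volume : Measure (Euc n)).toSphere

theorem norm_sphere_integral_le {n : ℕ} {v g : Euc n → ℂ} {B : ℝ}
    (hg : ∀ θ : Euc n, ‖θ‖ = 1 → ‖g θ‖ ≤ B) {C : ℝ} (hC : 0 ≤ C)
    (hvC : ∀ θ : Euc n, ‖θ‖ = 1 → ‖v θ‖ ≤ C) :
    ‖∫ θ : Metric.sphere (0 : Euc n) 1, v θ * g θ ∂(volume : Measure (Euc n)).toSphere‖ ≤
      C * B * (volume : Measure (Euc n)).toSphere.real Set.univ := by
  refine norm_integral_le_of_norm_le_const (Eventually.of_forall fun θ => ?_)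
  have hθ : ‖(θ : Euc n)‖ = 1 := by simp
  rw [norm_mul]
  exact mul_le_mul (hvC _ hθ) (hg _ hθ) (norm_nonneg _) hC

theorem continuous_radialMean {n : ℕ} {v : Euc n → ℂ}
    (hv : Continuous fun θ : Metric.sphere (0 : Euc n) 1 => v θ) (ψ : SchwartzMap (Euc n) ℂ) :
    Continuous (radialMean v ψ) := by
  have h : Continuous (Function.uncurry fun (r : ℝ) (θ : Metric.sphere (0 : Euc n) 1) =>
      v θ * ψ (r • (θ : Euc n))) := by
    refine (hv.comp continuous_snd).mul (ψ.continuous.comp ?_)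
    exact continuous_fst.smul (continuous_subtype_val.comp continuous_snd)
  have := continuous_parametric_integral_of_continuous
    (μ := (volume : Measure (Euc n)).toSphere) h isCompact_univ
  rw [Measure.restrict_univ] at this
  exact this

theorem exists_sphere_bound {n : ℕ} {v : Euc n → ℂ}
    (hv : Continuous fun θ : Metric.sphere (0 : Euc n) 1 => v θ) :
    ∃ C : ℝ, 0 ≤ C ∧ ∀ θ : Euc n, ‖θ‖ = 1 → ‖v θ‖ ≤ C := by
  obtain ⟨C, hC⟩ := isCompact_univ.exists_bound_of_continuousOn hv.continuousOn
  refine ⟨max C 0, le_max_right _ _, fun θ hθ => ?_⟩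
  exact (hC ⟨θ, by simpa using hθ⟩ (Set.mem_univ _)).trans (le_max_left _ _)

theorem radialMean_isBigO_atTop {n : ℕ} {v : Euc n → ℂ}
    (hv : Continuous fun θ : Metric.sphere (0 : Euc n) 1 => v θ) (ψ : SchwartzMap (Euc n) ℂ)
    (a : ℝ) : radialMean v ψ =O[atTop] (· ^ (-a)) := by
  obtain ⟨C, hC, hvC⟩ := exists_sphere_bound hv
  obtain ⟨K, hK⟩ := exists_nat_ge a
  obtain ⟨D, hD, hψ⟩ := schwartz_decay ψ K
  refine Asymptotics.IsBigO.of_bound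
    (C * D * (volume : Measure (Euc n)).toSphere.real Set.univ) ?_
  filter_upwards [eventually_ge_atTop 1] with r hr
  have h0 : 0 < r := by linarith
  have hle : ((1 + r) ^ K)⁻¹ ≤ r ^ (-a) := by
    rw [Real.rpow_neg h0.le]
    refine inv_anti₀ (by positivity) ?_
    calc r ^ a ≤ r ^ (K : ℝ) := Real.rpow_le_rpow_of_exponent_le hr hK
      _ = r ^ K := Real.rpow_natCast _ _
      _ ≤ (1 + r) ^ K := by gcongr; linarith
  refine (norm_sphere_integral_le (g := fun θ => ψ (r • θ)) (B := D * r ^ (-a)) ?_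
    hC hvC).trans (le_of_eq ?_)
  · intro θ hθ
    refine (hψ _).trans ?_
    rw [norm_smul, hθ, Real.norm_of_nonneg h0.le, mul_one]
    gcongr
  · rw [Real.norm_of_nonneg (by positivity)]; ring

theorem radialMean_expansion {n : ℕ} {v : Euc n → ℂ}
    (hv : Continuous fun θ : Metric.sphere (0 : Euc n) 1 => v θ) (ψ : SchwartzMap (Euc n) ℂ)
    (N : ℕ) :
    (fun t : ℝ => radialMean v ψ t - ∑ j ∈ Finset.range N,
      (∫ θ : Metric.sphere (0 : Euc n) 1, v θ * rayCoeff ψ j θ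
        ∂(volume : Measure (Euc n)).toSphere) * (t : ℂ) ^ j)
      =O[nhdsWithin 0 (Set.Ioi 0)] (fun t : ℝ => t ^ (N : ℝ)) := by
  obtain ⟨C, hC, hvC⟩ := exists_sphere_bound hv
  obtain ⟨D, hD⟩ := ray_taylor ψ N
  have hint : ∀ g : Euc n → ℂ, Continuous g →
      Integrable (fun θ : Metric.sphere (0 : Euc n) 1 => v θ * g θ)
        (volume : Measure (Euc n)).toSphere := fun g hg =>
    (hv.mul (hg.comp continuous_subtype_val)).integrable_of_hasCompactSupport
      (HasCompactSupport.of_compactSpace _)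
  refine Asymptotics.IsBigO.of_bound
    (C * D * (volume : Measure (Euc n)).toSphere.real Set.univ) ?_
  filter_upwards [Ioc_mem_nhdsGT (zero_lt_one' ℝ)] with t ht
  have e : radialMean v ψ t - ∑ j ∈ Finset.range N,
      (∫ θ : Metric.sphere (0 : Euc n) 1, v θ * rayCoeff ψ j θ
        ∂(volume : Measure (Euc n)).toSphere) * (t : ℂ) ^ j =
      ∫ θ : Metric.sphere (0 : Euc n) 1,
        v θ * (ψ (t • (θ : Euc n)) - ∑ j ∈ Finset.range N, rayCoeff ψ j θ * (t : ℂ) ^ j)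
        ∂(volume : Measure (Euc n)).toSphere := by
    simp only [mul_sub, Finset.mul_sum, ← mul_assoc]
    rw [integral_sub, integral_finsetSum]
    · simp only [integral_mul_const, radialMean]
    · exact fun j _ => (hint _ (continuous_rayCoeff ψ j)).mul_const _
    · exact hint (fun θ => ψ (t • θ)) (ψ.continuous.comp (by fun_prop))
    · exact integrable_finsetSum _ fun j _ => (hint _ (continuous_rayCoeff ψ j)).mul_const _
  rw [e]
  refine (norm_sphere_integral_le (g := fun θ => ψ (t • θ) -
    ∑ j ∈ Finset.range N, rayCoeff ψ j θ * (t : ℂ) ^ j)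
    (fun θ hθ => hD θ hθ t ⟨ht.1.le, ht.2⟩) hC hvC).trans (le_of_eq ?_)
  rw [Real.rpow_natCast, Real.norm_of_nonneg (pow_nonneg ht.1.le _)]; ring

/-! ### A single log-homogeneous component -/

/-- The summand of `|y|^z u(y) ψ(y)` of degree `l` in `log |y|`, for `u` log-homogeneous of order
`-n-p` with `l`-th component `v`. -/
def logTerm {n : ℕ} (p l : ℕ) (v : Euc n → ℂ) (ψ : SchwartzMap (Euc n) ℂ) (z : ℂ) (y : Euc n) : ℂ :=
  (‖y‖ : ℂ) ^ z * ((‖y‖ : ℂ) ^ (-(n : ℂ) - (p : ℂ)) * ((Real.log ‖y‖ : ℂ) ^ l * v y)) * ψ y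

/-- The Jacobian `r^{n-1}` turns `r^z r^{-n-p}` into the Mellin kernel at `s = z - p`. -/
theorem cpow_radial {n : ℕ} (hn : 1 ≤ n) (p : ℕ) (z : ℂ) {r : ℝ} (hr : 0 < r) :
    (r : ℂ) ^ (n - 1) * ((r : ℂ) ^ z * (r : ℂ) ^ (-(n : ℂ) - (p : ℂ))) =
      (r : ℂ) ^ (z - p - 1) := by
  have h0 : (r : ℂ) ≠ 0 := by exact_mod_cast hr.ne'
  rw [← Complex.cpow_natCast, ← Complex.cpow_add _ _ h0, ← Complex.cpow_add _ _ h0]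
  congr 1
  push_cast [hn]; ring

/-- Absolute convergence for `re z > p`, by comparison with a radial function that is integrable
because the Mellin transform of `(log r)^l (1 + |r|)^{-K}` converges. -/
theorem integrable_logTerm {n : ℕ} (hn : 1 ≤ n) {v : Euc n → ℂ}
    (hv : ContinuousOn v {y : Euc n | y ≠ 0})
    (hhom : ∀ t : ℝ, 0 < t → ∀ y : Euc n, y ≠ 0 → v (t • y) = v y)
    (ψ : SchwartzMap (Euc n) ℂ) (p l : ℕ)
    {z : ℂ} (hz : (p : ℝ) < z.re) : Integrable (logTerm p l v ψ z) := by
  have : Nonempty (Fin n) := ⟨⟨0, hn⟩⟩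
  have hd : Module.finrank ℝ (Euc n) = n := by simp
  have hvs : Continuous fun θ : Metric.sphere (0 : Euc n) 1 => v θ :=
    hv.comp_continuous continuous_subtype_val fun θ => by
      have : ‖(θ : Euc n)‖ = 1 := by simp
      exact norm_ne_zero_iff.1 (by simp)
  obtain ⟨C, hC, hvC⟩ := exists_sphere_bound hvs
  obtain ⟨K, hK⟩ := exists_nat_gt (z - p).re
  obtain ⟨D, hD, hψ⟩ := schwartz_decay ψ K
  let b : ℝ → ℂ := fun r => (((1 + |r|) ^ K)⁻¹ : ℝ)
  have hbc : Continuous b := by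
    refine Complex.continuous_ofReal.comp (Continuous.inv₀ (by fun_prop) fun r => ?_)
    positivity
  have hbn : ∀ r : ℝ, ‖b r‖ = ((1 + |r|) ^ K)⁻¹ := fun r => by
    rw [Complex.norm_real, Real.norm_of_nonneg (by positivity)]
  have hb := mellin_log_pow (f := b) (a := K) (hbc.locallyIntegrable.locallyIntegrableOn _)
    (by
      intro a' ha'
      refine Asymptotics.IsBigO.of_bound 1 ?_
      filter_upwards [eventually_ge_atTop 1] with r hr
      have h0 : 0 < r := by linarith
      rw [hbn, one_mul, Real.norm_of_nonneg (by positivity), Real.rpow_neg h0.le, abs_of_pos h0]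
      refine inv_anti₀ (by positivity) ?_
      calc r ^ a' ≤ r ^ (K : ℝ) := Real.rpow_le_rpow_of_exponent_le hr ha'.le
        _ = r ^ K := Real.rpow_natCast _ _
        _ ≤ (1 + r) ^ K := by gcongr; linarith)
    (by
      intro c hc
      refine Asymptotics.IsBigO.of_bound 1 ?_
      filter_upwards [Ioc_mem_nhdsGT (zero_lt_one' ℝ)] with r hr
      have h0 : 0 < r := hr.1
      rw [hbn, one_mul, Real.norm_of_nonneg (by positivity)]
      refine le_trans (inv_le_one_of_one_le₀ (one_le_pow₀ (by simp))) ?_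
      exact Real.one_le_rpow_of_pos_of_le_one_of_nonpos h0 hr.2 (by linarith))
    l (z - p) (by simp; linarith) hK
  let g : ℝ → ℝ := fun r => ‖(r : ℂ) ^ z * (r : ℂ) ^ (-(n : ℂ) - (p : ℂ)) *
    ((Real.log r : ℂ) ^ l * b r)‖
  have hgint : Integrable (fun y : Euc n => g ‖y‖) := by
    rw [integrable_fun_norm_addHaar, hd]
    refine (integrableOn_congr_fun (fun r hr => ?_) measurableSet_Ioi).1 hb.1.norm
    have hr : 0 < r := hr
    rw [← cpow_radial hn p z hr]
    simp only [g, norm_mul, smul_eq_mul, norm_pow, Complex.norm_real, Real.norm_eq_abs,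
      abs_of_pos hr]
    ring
  refine (hgint.const_mul (C * D)).mono' ?_ ?_
  · have hS : MeasurableSet {y : Euc n | y ≠ 0} := (measurableSet_singleton 0).compl
    have hres : (volume : Measure (Euc n)).restrict {y : Euc n | y ≠ 0} = volume :=
      restrict_compl_singleton 0
    have hvm : AEStronglyMeasurable v volume := by
      rw [← hres]; exact hv.aestronglyMeasurable hS
    have hm : ∀ w : ℂ, AEStronglyMeasurable (fun y : Euc n => (‖y‖ : ℂ) ^ w) volume :=
      fun w => (Measurable.pow_const (by fun_prop) w).aestronglyMeasurable
    have hlog : AEStronglyMeasurable (fun y : Euc n => (Real.log ‖y‖ : ℂ) ^ l) volume := by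
      have : Measurable (fun y : Euc n => (Real.log ‖y‖ : ℂ) ^ l) := by fun_prop
      exact this.aestronglyMeasurable
    exact ((hm z).mul ((hm _).mul (hlog.mul hvm))).mul ψ.continuous.aestronglyMeasurable
  · have h0 : ∀ᵐ y : Euc n, y ≠ 0 := Measure.ae_ne volume 0
    filter_upwards [h0] with y hy
    have hy' : 0 < ‖y‖ := norm_pos_iff.2 hy
    have hvy : ‖v y‖ ≤ C := by
      rw [← hhom ‖y‖⁻¹ (by positivity) y hy]
      exact hvC _ (by rw [norm_smul, norm_inv, norm_norm, inv_mul_cancel₀ hy'.ne'])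
    have hψy : ‖ψ y‖ ≤ D * ‖b ‖y‖‖ := by
      rw [hbn, abs_of_pos hy']; exact hψ y
    calc ‖logTerm p l v ψ z y‖
        = ‖(‖y‖ : ℂ) ^ z * (‖y‖ : ℂ) ^ (-(n : ℂ) - (p : ℂ)) * (Real.log ‖y‖ : ℂ) ^ l‖ *
          (‖v y‖ * ‖ψ y‖) := by
          simp only [logTerm, norm_mul]; ring
      _ ≤ ‖(‖y‖ : ℂ) ^ z * (‖y‖ : ℂ) ^ (-(n : ℂ) - (p : ℂ)) * (Real.log ‖y‖ : ℂ) ^ l‖ *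
          (C * (D * ‖b ‖y‖‖)) := by gcongr
      _ = C * D * g ‖y‖ := by simp only [g, norm_mul]; ring

/-- In polar coordinates the integral of a log-homogeneous component is a Mellin transform at
`s = z - p`. -/
theorem integral_logTerm {n : ℕ} (hn : 1 ≤ n) {v : Euc n → ℂ}
    (hv : ContinuousOn v {y : Euc n | y ≠ 0})
    (hhom : ∀ t : ℝ, 0 < t → ∀ y : Euc n, y ≠ 0 → v (t • y) = v y)
    (ψ : SchwartzMap (Euc n) ℂ) (p l : ℕ)
    {z : ℂ} (hz : (p : ℝ) < z.re) :
    ∫ y, logTerm p l v ψ z y =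
      mellin (fun r => (Real.log r : ℂ) ^ l * radialMean v ψ r) (z - p) := by
  rw [integral_polar hn (integrable_logTerm hn hv hhom ψ p l hz), mellin]
  refine setIntegral_congr_fun measurableSet_Ioi fun r hr => ?_
  have hr : 0 < r := hr
  have e : ∀ θ : Metric.sphere (0 : Euc n) 1, logTerm p l v ψ z (r • (θ : Euc n)) =
      ((r : ℂ) ^ z * (r : ℂ) ^ (-(n : ℂ) - (p : ℂ)) * (Real.log r : ℂ) ^ l) *
        (v θ * ψ (r • (θ : Euc n))) := by
    intro θ
    have hθ : ‖(θ : Euc n)‖ = 1 := by simp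
    have hθ0 : (θ : Euc n) ≠ 0 := norm_ne_zero_iff.1 (by simp)
    have hnr : ‖r • (θ : Euc n)‖ = r := by
      rw [norm_smul, hθ, mul_one, Real.norm_of_nonneg hr.le]
    simp only [logTerm, hnr, hhom r hr _ hθ0]
    ring
  simp only [e, integral_const_mul, smul_eq_mul]
  rw [← cpow_radial hn p z hr, radialMean]
  ring

/-- The statement for a single component `v` of parity `(-1)^(p+1)`: the coefficient of `r^p` in the
spherical mean of `v` is the integral of an odd function, so the candidate pole at `z = 0` (that
is, `s = -p`) is absent. -/
theorem exists_continuation_logTerm {n : ℕ} (hn : 1 ≤ n) {v : Euc n → ℂ}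
    (hv : ContinuousOn v {y : Euc n | y ≠ 0})
    (hhom : ∀ t : ℝ, 0 < t → ∀ y : Euc n, y ≠ 0 → v (t • y) = v y)
    (ψ : SchwartzMap (Euc n) ℂ) (p l : ℕ)
    (hpar : ∀ y : Euc n, y ≠ 0 → v (-y) = (-1) ^ (p + 1) * v y) :
    ∃ M : ℂ → ℂ, Meromorphic M ∧ AnalyticAt ℂ M 0 ∧
      ∀ z : ℂ, (p : ℝ) < z.re → M z = ∫ y, logTerm p l v ψ z y := by
  have hvs : Continuous fun θ : Metric.sphere (0 : Euc n) 1 => v θ :=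
    hv.comp_continuous continuous_subtype_val fun θ => norm_ne_zero_iff.1 (by simp)
  have hc0 : ∫ θ : Metric.sphere (0 : Euc n) 1, v θ * rayCoeff ψ p θ
      ∂(volume : Measure (Euc n)).toSphere = 0 := by
    refine integral_sphere_odd (f := fun θ => v θ * rayCoeff ψ p θ) fun θ hθ => ?_
    have hθ0 : θ ≠ 0 := norm_ne_zero_iff.1 (by simp [hθ])
    have h1 : (-1 : ℂ) ^ p * (-1) ^ p = 1 := by rw [← mul_pow]; simp
    rw [hpar θ hθ0, rayCoeff_neg, pow_succ]
    linear_combination (-(v θ * rayCoeff ψ p θ)) * h1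
  obtain ⟨M, hM, hM0, hMs⟩ := mellin_continuation (continuous_radialMean hvs ψ)
    (radialMean_isBigO_atTop hvs ψ) _ (radialMean_expansion hvs ψ) p hc0
  have hMl : Meromorphic (iteratedDeriv l M) := by
    rw [iteratedDeriv_eq_iterate]; exact hM.iterated_deriv
  refine ⟨fun z => iteratedDeriv l M (z - p), fun z => ?_, ?_, fun z hz => ?_⟩
  · exact (hMl (z - p)).comp_analyticAt (g := fun z : ℂ => z - p) (by fun_prop)
  · have h : AnalyticAt ℂ (iteratedDeriv l M) ((0 : ℂ) - p) := by
      rw [iteratedDeriv_eq_iterate, zero_sub]; exact hM0.iterated_deriv l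
    exact h.fun_comp (f := fun z : ℂ => z - p) (by fun_prop)
  · have hs : 0 < (z - p).re := by simp; linarith
    have hopen : IsOpen {s : ℂ | 0 < s.re} := isOpen_lt continuous_const Complex.continuous_re
    have hev : M =ᶠ[nhds (z - p)] mellin (radialMean v ψ) := by
      filter_upwards [hopen.mem_nhds hs] with s hs using hMs s hs
    show iteratedDeriv l M (z - p) = _
    rw [integral_logTerm hn hv hhom ψ p l hz, hev.iteratedDeriv_eq l]
    refine (mellin_log_pow (a := (z - p).re + 1)
      ((continuous_radialMean hvs ψ).locallyIntegrable.locallyIntegrableOn _)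
      (fun a' _ => radialMean_isBigO_atTop hvs ψ a') (fun c hc => ?_) l (z - p) hs
      (by linarith)).2
    have h1 := radialMean_expansion hvs ψ 0
    simp only [Finset.range_zero, Finset.sum_empty, sub_zero, Nat.cast_zero] at h1
    refine h1.trans (Asymptotics.IsBigO.of_bound 1 ?_)
    filter_upwards [Ioc_mem_nhdsGT (zero_lt_one' ℝ)] with r hr
    rw [Real.rpow_zero, norm_one, one_mul, Real.norm_of_nonneg (Real.rpow_nonneg hr.1.le _)]
    exact Real.one_le_rpow_of_pos_of_le_one_of_nonpos hr.1 hr.2 (by linarith)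

/-! ### Holomorphy at the origin -/

/-- If `u` is log-homogeneous of order `(-n-p, k)` with parity
`u(-y) = (-1)^{p+1} u(y)`, then for every Schwartz `ψ` the meromorphic continuation of
`z ↦ ∫ |y|^z u(y) ψ(y) dy` (defined by the convergent integral on `Re z > p`) is
holomorphic at `z = 0`. -/
theorem statement2 (n : ℕ) (hn : 1 ≤ n) (k p : ℕ)
    (u : Euc n → ℂ) (hu : IsLogHomFun n (-(n : ℂ) - (p : ℂ)) k u)
    (hpar : ∀ y : Euc n, y ≠ 0 → u (-y) = (-1 : ℂ) ^ (p + 1) * u y)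
    (ψ : SchwartzMap (Euc n) ℂ) :
    ∃ G : ℂ → ℂ,
      (∀ z : ℂ, MeromorphicAt G z) ∧
      (∀ z : ℂ, (p : ℝ) < z.re → G z = ∫ y : Euc n, (‖y‖ : ℂ) ^ z * u y * ψ y) ∧
      AnalyticAt ℂ G 0 := by
  obtain ⟨ul, hsm, hhom, hrep⟩ := hu
  -- Projecting each component to parity `(-1)^(p+1)` leaves `u` unchanged, so the parity of the
  -- given components `ul` never has to be deduced from that of `u`.
  let v : Fin (k + 1) → Euc n → ℂ := fun l y => (ul l y + (-1) ^ (p + 1) * ul l (-y)) / 2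
  have hsq : (-1 : ℂ) ^ (p + 1) * (-1) ^ (p + 1) = 1 := by rw [← mul_pow]; simp
  have hvc : ∀ l, ContinuousOn (v l) {y : Euc n | y ≠ 0} := by
    intro l
    have h1 := (hsm l).continuousOn
    have h2 : ContinuousOn (fun y => ul l (-y)) {y : Euc n | y ≠ 0} :=
      h1.comp continuous_neg.continuousOn fun y hy => neg_ne_zero.2 hy
    exact (h1.add (continuousOn_const.mul h2)).div_const _
  have hvh : ∀ l, ∀ t : ℝ, 0 < t → ∀ y : Euc n, y ≠ 0 → v l (t • y) = v l y := by
    intro l t ht y hy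
    simp only [v]
    rw [← smul_neg, hhom l t ht y hy, hhom l t ht (-y) (neg_ne_zero.2 hy)]
  have hvp : ∀ l, ∀ y : Euc n, y ≠ 0 → v l (-y) = (-1) ^ (p + 1) * v l y := by
    intro l y _
    simp only [v, neg_neg]
    linear_combination (-(ul l (-y)) / 2) * hsq
  have hrep' : ∀ y : Euc n, y ≠ 0 → u y = (‖y‖ : ℂ) ^ (-(n : ℂ) - (p : ℂ)) *
      ∑ l : Fin (k + 1), (Real.log ‖y‖ : ℂ) ^ (l : ℕ) * v l y := by
    intro y hy
    have h1 := hrep y hy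
    have h2 := hrep (-y) (neg_ne_zero.2 hy)
    rw [norm_neg, hpar y hy] at h2
    have h3 : ∑ l : Fin (k + 1), (Real.log ‖y‖ : ℂ) ^ (l : ℕ) * v l y =
        (∑ l : Fin (k + 1), (Real.log ‖y‖ : ℂ) ^ (l : ℕ) * ul l y + (-1) ^ (p + 1) *
          ∑ l : Fin (k + 1), (Real.log ‖y‖ : ℂ) ^ (l : ℕ) * ul l (-y)) / 2 := by
      rw [Finset.mul_sum, ← Finset.sum_add_distrib, Finset.sum_div]
      refine Finset.sum_congr rfl fun l _ => ?_
      simp only [v]; ring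
    rw [h3]
    linear_combination (1 / 2) * h1 + ((-1 : ℂ) ^ (p + 1) / 2) * h2 - (u y / 2) * hsq
  choose M hM hM0 hMz using fun l : Fin (k + 1) =>
    exists_continuation_logTerm hn (hvc l) (hvh l) ψ p l (hvp l)
  refine ⟨fun z => ∑ l, M l z, fun z => ?_, fun z hz => ?_, ?_⟩
  · exact MeromorphicAt.fun_sum fun l _ => hM l z
  · have : Nonempty (Fin n) := ⟨⟨0, hn⟩⟩
    simp only [hMz _ z hz]
    rw [← integral_finsetSum _ fun l _ => integrable_logTerm hn (hvc l) (hvh l) ψ p l hz]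
    refine integral_congr_ae ?_
    have h0 : ∀ᵐ y : Euc n, y ≠ 0 := Measure.ae_ne volume 0
    filter_upwards [h0] with y hy
    simp only [hrep' y hy, logTerm, Finset.mul_sum, Finset.sum_mul]
  · exact Finset.analyticAt_fun_sum _ fun l _ => hM0 l
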